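/- arXiv:2603.27696 — 4 statements merged into one kernel-verified Lean document; each statement's English description precedes it below -/
import Mathlib

section
/- Let G be a finite simple connected graph with a cut vertex u. Then u does not belong to any inclusion-minimal monitoring edge-geodetic set of G. -/
/-!
Suppose `u ∈ S`; then `S \ {u}` is already an MEG-set, so `S` is not minimal. Only edges monitored
by a pair `x, u` need attention. Let `z` be a vertex separated from `x` by `u`. Some pair `a, b` of
`S` monitors an edge at `z`, and a geodesic from `a` to `b` through `z` meets `u` at most once, so
one of `a, b`, say `s`, is different from `u` and separated from `x` by `u`
(`exists_mem_separated`). Every geodesic from `x` to `s` then starts with a geodesic from `x` to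
`u`, so `x, s` monitors every edge that `x, u` monitors (`exists_monitors_of_monitors_cut`).
-/

open SimpleGraph

variable {V : Type*}

/-- A walk is a shortest path if its length equals the distance between its endpoints. -/
def IsShortest (G : SimpleGraph V) {u v : V} (p : G.Walk u v) : Prop :=
  p.length = G.dist u v

/-- `S` is a geodetic set: every vertex lies on some shortest path between
two distinct vertices of `S`. -/
def IsGeodeticSet (G : SimpleGraph V) (S : Set V) : Prop :=
  ∀ x : V, ∃ u ∈ S, ∃ v ∈ S, u ≠ v ∧ ∃ p : G.Walk u v, IsShortest G p ∧ x ∈ p.support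

/-- `S` is an edge-geodetic set: every edge lies on some shortest path between
two distinct vertices of `S`. -/
def IsEdgeGeodeticSet (G : SimpleGraph V) (S : Set V) : Prop :=
  ∀ e ∈ G.edgeSet, ∃ u ∈ S, ∃ v ∈ S, u ≠ v ∧ ∃ p : G.Walk u v, IsShortest G p ∧ e ∈ p.edges

/-- `S` is a strong edge-geodetic set: one can choose a single shortest path for each
pair of distinct vertices of `S` so that the chosen paths cover every edge. -/
def IsStrongEdgeGeodeticSet (G : SimpleGraph V) (S : Set V) : Prop :=
  ∃ f : ∀ u v : V, u ∈ S → v ∈ S → u ≠ v → G.Walk u v,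
    (∀ u v hu hv huv, IsShortest G (f u v hu hv huv)) ∧
    ∀ e ∈ G.edgeSet, ∃ u v, ∃ hu : u ∈ S, ∃ hv : v ∈ S, ∃ huv : u ≠ v,
      e ∈ (f u v hu hv huv).edges

/-- The pair `u, v` monitors the edge `e`: `u ≠ v` and `e` lies on every shortest
`u`–`v` path. -/
def Monitors (G : SimpleGraph V) (u v : V) (e : Sym2 V) : Prop :=
  u ≠ v ∧ ∀ p : G.Walk u v, IsShortest G p → e ∈ p.edges

/-- `S` is a monitoring edge-geodetic set: every edge is monitored by some pair of
distinct vertices of `S`. -/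
def IsMEGSet (G : SimpleGraph V) (S : Set V) : Prop :=
  ∀ e ∈ G.edgeSet, ∃ u ∈ S, ∃ v ∈ S, Monitors G u v e

/-- The geodetic number `g(G)`. -/
noncomputable def geodeticNumber (G : SimpleGraph V) : ℕ :=
  sInf {n : ℕ | ∃ S : Set V, IsGeodeticSet G S ∧ S.ncard = n}

/-- The edge-geodetic number `eg(G)`. -/
noncomputable def edgeGeodeticNumber (G : SimpleGraph V) : ℕ :=
  sInf {n : ℕ | ∃ S : Set V, IsEdgeGeodeticSet G S ∧ S.ncard = n}

/-- The strong edge-geodetic number `seg(G)`. -/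
noncomputable def strongEdgeGeodeticNumber (G : SimpleGraph V) : ℕ :=
  sInf {n : ℕ | ∃ S : Set V, IsStrongEdgeGeodeticSet G S ∧ S.ncard = n}

/-- The monitoring edge-geodetic number `meg(G)`. -/
noncomputable def monitoringEdgeGeodeticNumber (G : SimpleGraph V) : ℕ :=
  sInf {n : ℕ | ∃ S : Set V, IsMEGSet G S ∧ S.ncard = n}

theorem Monitors.symm {V : Type*} {G : SimpleGraph V} {x y : V} {e : Sym2 V}
    (h : Monitors G x y e) : Monitors G y x e := by
  refine ⟨h.1.symm, fun p hp => ?_⟩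
  have := h.2 p.reverse (by
    unfold IsShortest at *
    rw [Walk.length_reverse, hp, SimpleGraph.dist_comm])
  simpa using this

/-- When `u` is a cut vertex, every other vertex `x` is separated by `u` from some `z`. -/
theorem exists_separated {V : Type*} {G : SimpleGraph V} {u : V}
    (hcut : ¬ (G.induce {v : V | v ≠ u}).Connected) {x : V} (hx : x ≠ u) :
    ∃ z, z ≠ u ∧ ∀ p : G.Walk x z, u ∈ p.support := by
  by_contra! h
  apply hcut
  have key : ∀ z : {v : V | v ≠ u}, (G.induce {v : V | v ≠ u}).Reachable ⟨x, hx⟩ z := by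
    rintro ⟨z, hz⟩
    obtain ⟨p, hp⟩ := h z hz
    exact ⟨p.induce {v : V | v ≠ u} fun v hv hvu => hp (hvu ▸ hv)⟩
  have : Nonempty {v : V | v ≠ u} := ⟨⟨x, hx⟩⟩
  exact ⟨fun a b => (key a).symm.trans (key b)⟩

/-- An MEG-set contains a vertex other than `u` that is separated from `x` by the cut
vertex `u`. -/
theorem exists_mem_separated {V : Type*} {G : SimpleGraph V} (hconn : G.Connected) {u : V}
    (hcut : ¬ (G.induce {v : V | v ≠ u}).Connected) {S : Set V} (hS : IsMEGSet G S)
    {x : V} (hx : x ≠ u) :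
    ∃ s ∈ S, s ≠ u ∧ ∀ p : G.Walk x s, u ∈ p.support := by
  classical
  obtain ⟨z, hz, hsep⟩ := exists_separated hcut hx
  obtain ⟨w, hw⟩ : ∃ w, G.Adj z w := by
    obtain ⟨p⟩ := hconn.preconnected z u
    cases p with
    | nil => exact absurd rfl hz
    | cons h _ => exact ⟨_, h⟩
  obtain ⟨a, ha, b, hb, -, hmon⟩ := hS s(z, w) hw
  by_contra! hno
  -- A vertex of `S` is `u` itself or joined to `x` off `u`, so its walks to `z` all meet `u`.
  have key : ∀ c ∈ S, ∀ q : G.Walk c z, u ∈ q.support := by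
    intro c hc q
    by_cases hcu : c = u
    · subst hcu
      exact q.start_mem_support
    · obtain ⟨p, hp⟩ := hno c hc hcu
      have := hsep (p.append q)
      rw [Walk.mem_support_append_iff] at this
      exact this.resolve_left hp
  obtain ⟨p, hp⟩ := hconn.exists_walk_length_eq_dist a b
  have hpath := p.isPath_of_length_eq_dist hp
  have hzp : z ∈ p.support := p.fst_mem_support_of_mem_edges (hmon p hp)
  have h1 : u ∈ (p.takeUntil z hzp).support := key a ha _
  have h2 : u ∈ (p.dropUntil z hzp).support := by
    have := key b hb (p.dropUntil z hzp).reverse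
    simpa using this
  -- The geodesic `p` meets `u` both before and after `z ≠ u`, so it is not a path.
  have hnd := hpath.support_nodup
  rw [← p.take_spec hzp, Walk.support_append, List.nodup_append] at hnd
  rw [Walk.mem_support_iff] at h2
  exact hnd.2.2 u h1 u (h2.resolve_left hz.symm) rfl

/-- The cut vertex `u` in a monitoring pair `x, u` can be replaced by another vertex of the
MEG-set. -/
theorem exists_monitors_of_monitors_cut {V : Type*} {G : SimpleGraph V} (hconn : G.Connected)
    {u : V} (hcut : ¬ (G.induce {v : V | v ≠ u}).Connected) {S : Set V} (hS : IsMEGSet G S)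
    {x : V} {e : Sym2 V} (h : Monitors G x u e) :
    ∃ s ∈ S \ {u}, Monitors G x s e := by
  classical
  obtain ⟨s, hs, hsu, hsep⟩ := exists_mem_separated hconn hcut hS h.1
  refine ⟨s, ⟨hs, hsu⟩, ?_, fun p hp => ?_⟩
  · rintro rfl
    have := hsep Walk.nil
    simp only [Walk.support_nil, List.mem_singleton] at this
    exact hsu this.symm
  · exact p.edges_takeUntil_subset_edges (hsep p)
      (h.2 _ (length_eq_dist_of_subwalk hp (p.isSubwalk_takeUntil (hsep p))))

/-- A cut vertex of a connected graph does not belong to any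
inclusion-minimal monitoring edge-geodetic set. -/
theorem cut_vertex_not_in_minimal_meg {V : Type*} [Fintype V]
    (G : SimpleGraph V) (hconn : G.Connected) (u : V)
    (hcut : ¬ (G.induce {v : V | v ≠ u}).Connected)
    (S : Set V) (hS : IsMEGSet G S)
    (hmin : ∀ T : Set V, T ⊂ S → ¬ IsMEGSet G T) :
    u ∉ S := by
  intro hu
  refine hmin (S \ {u}) (Set.sdiff_singleton_ssubset.2 hu) fun e he => ?_
  obtain ⟨x, hx, y, hy, h⟩ := hS e he
  by_cases hyu : y = u
  · subst hyu
    obtain ⟨s, hs, hm⟩ := exists_monitors_of_monitors_cut hconn hcut hS h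
    exact ⟨x, ⟨hx, h.1⟩, s, hs, hm⟩
  · by_cases hxu : x = u
    · subst hxu
      obtain ⟨s, hs, hm⟩ := exists_monitors_of_monitors_cut hconn hcut hS h.symm
      exact ⟨y, ⟨hy, hyu⟩, s, hs, hm⟩
    · exact ⟨x, ⟨hx, hxu⟩, y, ⟨hy, hyu⟩, h⟩
end

section
/- In a finite simple connected graph G with at least one edge, every simplicial vertex belongs to every edge-geodetic set of G, and hence to every monitoring edge-geodetic set of G. -/
/-!
A simplicial vertex `v` cannot be an interior vertex of a shortest path: its two neighbours on the
path would coincide or be adjacent, and the path could be shortened by skipping `v`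
(`eq_endpoint_of_mem_isShortest`). A connected graph with an edge has some edge at `v`; a shortest
path through it between vertices of `S` then has `v` as an endpoint, so `v ∈ S`. A monitoring
edge-geodetic set is edge-geodetic because connectedness supplies a shortest path for each pair.
-/

open SimpleGraph

variable {V : Type*}

/-- A simplicial vertex on a shortest path is one of its endpoints. -/
theorem eq_endpoint_of_mem_isShortest {V : Type*} {G : SimpleGraph V} {v : V}
    (hsimp : ∀ x y : V, G.Adj v x → G.Adj v y → x ≠ y → G.Adj x y)
    {a b : V} {p : G.Walk a b} (hp : IsShortest G p) (hv : v ∈ p.support) :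
    v = a ∨ v = b := by
  obtain ⟨q, r, rfl⟩ := Walk.mem_support_iff_exists_append.mp hv
  unfold IsShortest at hp
  rw [Walk.length_append, ← Walk.length_reverse q] at hp
  -- Reversing `q` makes both halves start at `v`, so each exposes a neighbour of `v`.
  generalize q.reverse = q' at hp
  cases q' with
  | nil => exact Or.inl rfl
  | @cons _ x _ hx q' =>
    cases r with
    | nil => exact Or.inr rfl
    | @cons _ y _ hy r =>
      exfalso
      simp only [Walk.length_cons] at hp
      by_cases hxy : x = y
      · subst hxy
        have h := dist_le (q'.reverse.append r)
        simp only [Walk.length_append, Walk.length_reverse] at h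
        omega
      · have h := dist_le (q'.reverse.append (Walk.cons (hsimp x y hx hy hxy) r))
        simp only [Walk.length_append, Walk.length_reverse, Walk.length_cons] at h
        omega

theorem IsMEGSet.isEdgeGeodeticSet {V : Type*} {G : SimpleGraph V} (hconn : G.Connected)
    {S : Set V} (hS : IsMEGSet G S) : IsEdgeGeodeticSet G S := by
  intro e he
  obtain ⟨a, ha, b, hb, hab, h⟩ := hS e he
  obtain ⟨p, hp⟩ := hconn.exists_walk_length_eq_dist a b
  exact ⟨a, ha, b, hb, hab, p, hp, h p hp⟩

/-- In a connected graph with at least one edge, every simplicial vertex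
belongs to every edge-geodetic set, and hence to every monitoring edge-geodetic set. -/
theorem simplicial_mem_every_eg_and_meg {V : Type*} [Fintype V]
    (G : SimpleGraph V) (hconn : G.Connected) (hne : G.edgeSet.Nonempty) (v : V)
    (hsimp : ∀ x y : V, G.Adj v x → G.Adj v y → x ≠ y → G.Adj x y) :
    (∀ S : Set V, IsEdgeGeodeticSet G S → v ∈ S) ∧
    (∀ S : Set V, IsMEGSet G S → v ∈ S) := by
  have hEG : ∀ S : Set V, IsEdgeGeodeticSet G S → v ∈ S := by
    intro S hS
    obtain ⟨w, hw⟩ : ∃ w, G.Adj v w := by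
      obtain ⟨e, he⟩ := hne
      induction e with
      | h x y =>
        have : Nontrivial V := ⟨x, y, G.ne_of_adj he⟩
        exact hconn.preconnected.exists_adj_of_nontrivial v
    obtain ⟨a, ha, b, hb, -, p, hp, hmem⟩ := hS s(v, w) hw
    rcases eq_endpoint_of_mem_isShortest hsimp hp (p.fst_mem_support_of_mem_edges hmem) with h | h
    · exact h ▸ ha
    · exact h ▸ hb
  exact ⟨hEG, fun S hS => hEG S (hS.isEdgeGeodeticSet hconn)⟩
end

section
/- Let G be a finite simple connected graph and let u, v be distinct vertices of degree at least one that are open twins (N(u) = N(v)) or closed twins (N[u] = N[v]). Then both u and v belong to every monitoring edge-geodetic set of G. -/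
/-!
If every neighbour of `u` other than `v` is a neighbour of `v`, which holds for open and for closed
twins alike, then replacing `u` by `v` sends adjacent vertices to adjacent or equal ones. Hence it
turns every walk into a walk of at most the same length that avoids `u`
(`exists_walk_avoiding`). When both endpoints differ from `u`, they do not move, so some shortest
path between them avoids `u`. A pair of vertices monitoring an edge at `u` must therefore contain
`u` (`mem_of_nbr_subset`), and such an edge exists because `u` has a neighbour.
-/

open SimpleGraph

variable {V : Type*}

open Classical in
/-- Replacing `u` by `v` along a walk and dropping repetitions (an edge `uv` collapses to `v`)
gives a walk that is no longer and avoids `u`. -/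
lemma exists_walk_avoiding {V : Type*} (G : SimpleGraph V) {u v : V} (huv : u ≠ v)
    (hN : ∀ w, G.Adj u w → w ≠ v → G.Adj v w) {a b : V} (p : G.Walk a b) :
    ∃ q : G.Walk (if a = u then v else a) (if b = u then v else b),
      q.length ≤ p.length ∧ u ∉ q.support := by
  induction p with
  | @nil a =>
    refine ⟨Walk.nil, le_rfl, ?_⟩
    rw [Walk.support_nil, List.mem_singleton]
    split_ifs with h
    · exact huv
    · exact Ne.symm h
  | @cons a c b hac p ih =>
    obtain ⟨q, hq, hu⟩ := ih
    have hstep : (if a = u then v else a) = (if c = u then v else c) ∨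
        G.Adj (if a = u then v else a) (if c = u then v else c) := by
      have := hac.ne
      have := hac.symm
      have := fun w h h' => (hN w h h').symm
      split_ifs <;> grind
    rcases hstep with h | h
    · rw [h]
      exact ⟨q, by rw [Walk.length_cons]; omega, hu⟩
    · refine ⟨Walk.cons h q, by simpa using hq, ?_⟩
      rw [Walk.support_cons, List.mem_cons, not_or]
      refine ⟨?_, hu⟩
      split_ifs with h
      · exact huv
      · exact Ne.symm h

lemma mem_of_nbr_subset {V : Type*} (G : SimpleGraph V) (hconn : G.Connected) {u v : V}
    (huv : u ≠ v) (hdu : (G.neighborSet u).Nonempty)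
    (hN : ∀ w, G.Adj u w → w ≠ v → G.Adj v w) {S : Set V} (hS : IsMEGSet G S) : u ∈ S := by
  by_contra huS
  obtain ⟨w, hw⟩ := hdu
  obtain ⟨x, hx, y, hy, -, hmon⟩ := hS s(u, w) hw
  have hxu : x ≠ u := fun h => huS (h ▸ hx)
  have hyu : y ≠ u := fun h => huS (h ▸ hy)
  obtain ⟨p, hp⟩ := hconn.exists_walk_length_eq_dist x y
  have hq := exists_walk_avoiding G huv hN p
  rw [if_neg hxu, if_neg hyu] at hq
  obtain ⟨q, hq, huq⟩ := hq
  exact huq (q.fst_mem_support_of_mem_edges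
    (hmon q (le_antisymm (hq.trans hp.le) (SimpleGraph.dist_le q))))

/-- Every pair of (open or closed) twins of degree at least one belongs
to every monitoring edge-geodetic set. -/
theorem twins_mem_every_meg {V : Type*} [Fintype V]
    (G : SimpleGraph V) (hconn : G.Connected) (u v : V) (huv : u ≠ v)
    (hdu : (G.neighborSet u).Nonempty) (hdv : (G.neighborSet v).Nonempty)
    (htwin : G.neighborSet u = G.neighborSet v ∨
      insert u (G.neighborSet u) = insert v (G.neighborSet v)) :
    ∀ S : Set V, IsMEGSet G S → u ∈ S ∧ v ∈ S := by
  intro S hS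
  have key : ∀ w, w ≠ u → w ≠ v → (G.Adj u w ↔ G.Adj v w) := by
    intro w hwu hwv
    rcases htwin with h | h
    · simpa using Set.ext_iff.mp h w
    · simpa [hwu, hwv] using Set.ext_iff.mp h w
  exact ⟨mem_of_nbr_subset G hconn huv hdu (fun w h hw => (key w h.ne' hw).1 h) hS,
    mem_of_nbr_subset G hconn huv.symm hdv (fun w h hw => (key w hw h.ne').2 h) hS⟩
end

section
/- Let G be a finite simple connected graph and S ⊆ V(G). Then S is a monitoring edge-geodetic set of G if and only if for every assignment f that chooses, for each unordered pair of distinct vertices of S, one shortest path between them, the union of the chosen paths covers every edge of G (that is, S together with the assignment f is a strong edge-geodetic set for every choice of f). -/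
open SimpleGraph

variable {V : Type*}

/-- `S` is a monitoring edge-geodetic set iff for every assignment of one
shortest path to each pair of distinct vertices of `S`, the chosen paths cover every
edge of `G`. -/
theorem meg_iff_every_assignment_strong {V : Type*} [Fintype V]
    (G : SimpleGraph V) (hconn : G.Connected) (S : Set V) :
    IsMEGSet G S ↔
      ∀ f : ∀ u v : V, u ∈ S → v ∈ S → u ≠ v → G.Walk u v,
        (∀ u v hu hv huv, IsShortest G (f u v hu hv huv)) →
        ∀ e ∈ G.edgeSet, ∃ u v, ∃ hu : u ∈ S, ∃ hv : v ∈ S, ∃ huv : u ≠ v,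
          e ∈ (f u v hu hv huv).edges := by
  constructor
  · intro h f hf e he
    obtain ⟨u, hu, v, hv, huv, hmon⟩ := h e he
    exact ⟨u, v, hu, hv, huv, hmon _ (hf u v hu hv huv)⟩
  · intro h e he
    by_contra hno
    -- No pair monitors `e`, so every pair of distinct vertices of `S` has a geodesic avoiding `e`.
    have avoid : ∀ u v : V, u ∈ S → v ∈ S → u ≠ v →
        ∃ p : G.Walk u v, IsShortest G p ∧ e ∉ p.edges := by
      intro u v hu hv huv
      by_contra hp
      push Not at hp
      exact hno ⟨u, hu, v, hv, huv, hp⟩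
    choose f hf hef using avoid
    obtain ⟨u, v, hu, hv, huv, hmem⟩ := h f hf e he
    exact hef u v hu hv huv hmem
end
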